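/- Let T > 0 and α > 0 be constants, let δ : ℝ → ℝ be continuous and nonnegative on [0,T], and let y : ℝ → ℝ be differentiable on [0,T] with y(0) = y₀ ≥ 0 and y'(t) ≤ δ(t) + α·y(t)² for every t ∈ [0,T]. Set η = y₀ + ∫₀ᵀ δ(s) ds. If α·η·T < 1, then y(t) ≤ η / (1 − α·η·T) for every t ∈ [0,T]; in particular y remains bounded on [0,T]. -/

import Mathlib

/-!
The positive part `y⁺ = max y 0` inherits the differential inequality, at the zeros of `y` by means
of its right derivative. Integrating, `y⁺ ≤ u` with `u(t) = η + α ∫₀ᵗ (y⁺)²`, and `u' ≤ α u²`, so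
that `1 / u` decreases at rate at most `α`, which bounds `u(T)` by `η / (1 - α η T)`. The division
by `u` needs `η > 0`; the case `η = 0` is a limit.
-/

open Set MeasureTheory

section RightDerivative

variable {y : ℝ → ℝ} {y' x : ℝ}

theorem hasDerivWithinAt_Ioi_max_zero_of_eq_zero (hy : HasDerivWithinAt y y' (Ioi x) x)
    (hx : y x = 0) : HasDerivWithinAt (fun s => max (y s) 0) (max y' 0) (Ioi x) x := by
  rw [hasDerivWithinAt_iff_tendsto_slope' self_notMem_Ioi] at hy ⊢
  refine (hy.max tendsto_const_nhds).congr' ?_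
  filter_upwards [self_mem_nhdsWithin] with s (hs : x < s)
  simp only [slope_def_field, hx, max_self, sub_zero]
  rw [← max_div_div_right (sub_pos.2 hs).le, zero_div]

theorem exists_hasDerivWithinAt_Ioi_max_zero_le {δ α : ℝ} (hδ : 0 ≤ δ)
    (hy : HasDerivWithinAt y y' (Ioi x) x) (hle : y' ≤ δ + α * y x ^ 2) :
    ∃ p, HasDerivWithinAt (fun s => max (y s) 0) p (Ioi x) x ∧ p ≤ δ + α * max (y x) 0 ^ 2 := by
  rcases lt_trichotomy (y x) 0 with hneg | hzero | hpos
  · refine ⟨0, (hasDerivWithinAt_const x _ 0).congr_of_eventuallyEq ?_ (max_eq_right hneg.le), ?_⟩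
    · filter_upwards [hy.continuousWithinAt.eventually_lt_const hneg] with s hs
        using max_eq_right hs.le
    · simpa [max_eq_right hneg.le] using hδ
  · refine ⟨max y' 0, hasDerivWithinAt_Ioi_max_zero_of_eq_zero hy hzero, max_le ?_ ?_⟩
    · simpa [hzero] using hle
    · simpa [hzero] using hδ
  · refine ⟨y', hy.congr_of_eventuallyEq ?_ (max_eq_left hpos.le), by rwa [max_eq_left hpos.le]⟩
    filter_upwards [hy.continuousWithinAt.eventually_const_lt hpos] with s hs
      using max_eq_left hs.le

end RightDerivative

theorem hasDerivAt_integral_of_continuousOn_Icc {E : Type*} [NormedAddCommGroup E]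
    [NormedSpace ℝ E] [CompleteSpace E] {g : ℝ → E} {a b t : ℝ} (hg : ContinuousOn g (Icc a b))
    (ht : t ∈ Ioo a b) : HasDerivAt (fun x => ∫ s in a..x, g s) (g t) t := by
  have hIoo : ContinuousOn g (Ioo a b) := hg.mono Ioo_subset_Icc_self
  exact intervalIntegral.integral_hasDerivAt_right
    ((hg.mono (Icc_subset_Icc_right ht.2.le)).intervalIntegrable_of_Icc ht.1.le)
    (hIoo.stronglyMeasurableAtFilter isOpen_Ioo t ht)
    (hIoo.continuousAt (isOpen_Ioo.mem_nhds ht))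

section QuadraticGrowth

variable {a b α : ℝ}

theorem le_div_of_deriv_right_le_mul_sq {u u' : ℝ → ℝ} (hab : a ≤ b)
    (hu : ContinuousOn u (Icc a b)) (hpos : ∀ t ∈ Icc a b, 0 < u t)
    (hderiv : ∀ t ∈ Ioo a b, HasDerivWithinAt u (u' t) (Ioi t) t)
    (hle : ∀ t ∈ Ioo a b, u' t ≤ α * u t ^ 2) (hsmall : α * u a * (b - a) < 1) :
    u b ≤ u a / (1 - α * u a * (b - a)) := by
  have hne : ∀ t ∈ Icc a b, u t ≠ 0 := fun t ht => (hpos t ht).ne'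
  have hua : 0 < u a := hpos a (left_mem_Icc.2 hab)
  have hinv : -(u b)⁻¹ - -(u a)⁻¹ ≤ ∫ _ in a..b, α := by
    refine intervalIntegral.sub_le_integral_of_hasDeriv_right_of_le hab (hu.inv₀ hne).neg
      (fun t ht => ((hderiv t ht).inv (hne t (Ioo_subset_Icc_self ht))).neg)
      (integrableOn_const (by simp)) fun t ht => ?_
    rw [neg_div, neg_neg, div_le_iff₀ (pow_pos (hpos t (Ioo_subset_Icc_self ht)) 2)]
    exact hle t ht
  rw [intervalIntegral.integral_const, smul_eq_mul] at hinv
  have hden : (1 - α * u a * (b - a)) / u a ≤ (u b)⁻¹ := calc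
    (1 - α * u a * (b - a)) / u a = (u a)⁻¹ - (b - a) * α := by field_simp
    _ ≤ (u b)⁻¹ := by linarith
  rw [← inv_div]
  exact le_inv_of_le_inv₀ (div_pos (sub_pos.2 hsmall) hua) hden

variable {f : ℝ → ℝ} {c : ℝ}

theorem le_div_of_le_add_mul_integral_sq_of_pos (hα : 0 ≤ α) (hc : 0 < c)
    (hf : ContinuousOn f (Icc a b)) (hf0 : ∀ t ∈ Icc a b, 0 ≤ f t)
    (hle : ∀ t ∈ Icc a b, f t ≤ c + α * ∫ s in a..t, f s ^ 2) (hsmall : α * c * (b - a) < 1) :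
    ∀ t ∈ Icc a b, f t ≤ c / (1 - α * c * (b - a)) := by
  intro t ht
  have hab : a ≤ b := ht.1.trans ht.2
  let u : ℝ → ℝ := fun t => c + α * ∫ s in a..t, f s ^ 2
  have hua : u a = c := by simp [u]
  have hint : IntervalIntegrable (fun s => f s ^ 2) volume a b :=
    (hf.pow 2).intervalIntegrable_of_Icc hab
  have hu : ContinuousOn u (Icc a b) := by
    have h := intervalIntegral.continuousOn_primitive_interval' hint left_mem_uIcc
    rw [uIcc_of_le hab] at h
    exact (h.const_mul α).const_add c
  have hpos : ∀ t ∈ Icc a b, 0 < u t := fun t ht =>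
    add_pos_of_pos_of_nonneg hc <| mul_nonneg hα <|
      intervalIntegral.integral_nonneg ht.1 fun s _ => sq_nonneg (f s)
  have hderiv : ∀ t ∈ Ioo a b, HasDerivAt u (α * f t ^ 2) t := fun t ht =>
    ((hasDerivAt_integral_of_continuousOn_Icc (hf.pow 2) ht).const_mul α).const_add c
  have hderiv_le : ∀ t ∈ Ioo a b, α * f t ^ 2 ≤ α * u t ^ 2 := fun t ht => by
    have ht' := Ioo_subset_Icc_self ht
    have h0 := hf0 t ht'
    gcongr
    exact hle t ht'
  calc f t ≤ u t := hle t ht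
    _ ≤ u b := by
      have := intervalIntegral.integral_mono_interval le_rfl ht.1 ht.2
        (.of_forall fun s => sq_nonneg (f s)) hint
      simp only [u]
      gcongr
    _ ≤ u a / (1 - α * u a * (b - a)) :=
      le_div_of_deriv_right_le_mul_sq hab hu hpos (fun t ht => (hderiv t ht).hasDerivWithinAt)
        hderiv_le (by rwa [hua])
    _ = c / (1 - α * c * (b - a)) := by rw [hua]

theorem le_div_of_le_add_mul_integral_sq (hα : 0 ≤ α)
    (hf : ContinuousOn f (Icc a b)) (hf0 : ∀ t ∈ Icc a b, 0 ≤ f t)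
    (hle : ∀ t ∈ Icc a b, f t ≤ c + α * ∫ s in a..t, f s ^ 2) (hsmall : α * c * (b - a) < 1) :
    ∀ t ∈ Icc a b, f t ≤ c / (1 - α * c * (b - a)) := by
  intro t ht
  have ha : a ∈ Icc a b := left_mem_Icc.2 (ht.1.trans ht.2)
  have hc : 0 ≤ c := by simpa using (hf0 a ha).trans (hle a ha)
  have hlim : ContinuousAt (fun d => d / (1 - α * d * (b - a))) c :=
    continuousAt_id.div (by fun_prop) (sub_pos.2 hsmall).ne'
  have hsmall' : ∀ᶠ d in nhds c, α * d * (b - a) < 1 :=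
    ContinuousAt.eventually_lt (by fun_prop) continuousAt_const hsmall
  refine ge_of_tendsto (hlim.tendsto.mono_left (nhdsWithin_le_nhds (s := Ioi c))) ?_
  filter_upwards [nhdsWithin_le_nhds hsmall', self_mem_nhdsWithin] with d hd (hcd : c < d)
  exact le_div_of_le_add_mul_integral_sq_of_pos hα (hc.trans_lt hcd) hf hf0
    (fun s hs => (hle s hs).trans (by gcongr)) hd t ht

end QuadraticGrowth

section RiccatiInequality

variable {a b α : ℝ} {δ y y' : ℝ → ℝ}

theorem max_zero_le_add_integral_of_deriv_right_le (hab : a ≤ b)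
    (hδ : IntegrableOn δ (Icc a b)) (hδ0 : ∀ t ∈ Ioo a b, 0 ≤ δ t) (hy : ContinuousOn y (Icc a b))
    (hderiv : ∀ t ∈ Ioo a b, HasDerivWithinAt y (y' t) (Ioi t) t)
    (hle : ∀ t ∈ Ioo a b, y' t ≤ δ t + α * y t ^ 2) :
    max (y b) 0 ≤ max (y a) 0 + (∫ s in a..b, δ s) + α * ∫ s in a..b, max (y s) 0 ^ 2 := by
  have hcont : ContinuousOn (fun s => max (y s) 0) (Icc a b) := hy.sup continuousOn_const
  have hsq : IntegrableOn (fun s => α * max (y s) 0 ^ 2) (Icc a b) :=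
    ((hcont.pow 2).const_mul α).integrableOn_Icc
  choose! p hp hp_le using fun t ht =>
    exists_hasDerivWithinAt_Ioi_max_zero_le (hδ0 t ht) (hderiv t ht) (hle t ht)
  have hsub := intervalIntegral.sub_le_integral_of_hasDeriv_right_of_le hab hcont hp
    (hδ.add hsq) hp_le
  have hsplit : ∫ s in a..b, (δ s + α * max (y s) 0 ^ 2) =
      (∫ s in a..b, δ s) + α * ∫ s in a..b, max (y s) 0 ^ 2 := by
    rw [intervalIntegral.integral_add, intervalIntegral.integral_const_mul]
    · exact (intervalIntegrable_iff_integrableOn_Icc_of_le hab).2 hδ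
    · exact (intervalIntegrable_iff_integrableOn_Icc_of_le hab).2 hsq
  linarith [hsub.trans_eq hsplit]

theorem ode_bounded_on_interval_general (hα : 0 ≤ α)
    (hδ : IntegrableOn δ (Icc a b)) (hδ0 : ∀ t ∈ Icc a b, 0 ≤ δ t) (hy : ContinuousOn y (Icc a b))
    (hderiv : ∀ t ∈ Ioo a b, HasDerivWithinAt y (y' t) (Ioi t) t)
    (hle : ∀ t ∈ Ioo a b, y' t ≤ δ t + α * y t ^ 2)
    {η : ℝ} (hη : max (y a) 0 + ∫ s in a..b, δ s ≤ η) (hsmall : α * η * (b - a) < 1) :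
    ∀ t ∈ Icc a b, y t ≤ η / (1 - α * η * (b - a)) := by
  have hint : ∀ t ∈ Icc a b, max (y t) 0 ≤ η + α * ∫ s in a..t, max (y s) 0 ^ 2 := by
    intro t ht
    have hsub : Icc a t ⊆ Icc a b := Icc_subset_Icc_right ht.2
    have hsub' : Ioo a t ⊆ Ioo a b := Ioo_subset_Ioo_right ht.2
    have hδt : ∫ s in a..t, δ s ≤ ∫ s in a..b, δ s :=
      intervalIntegral.integral_mono_interval le_rfl ht.1 ht.2
        (ae_restrict_of_forall_mem measurableSet_Ioc fun s hs => hδ0 s (Ioc_subset_Icc_self hs))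
        ((intervalIntegrable_iff_integrableOn_Icc_of_le (ht.1.trans ht.2)).2 hδ)
    have := max_zero_le_add_integral_of_deriv_right_le ht.1 (hδ.mono_set hsub)
      (fun s hs => hδ0 s (hsub (Ioo_subset_Icc_self hs))) (hy.mono hsub)
      (fun s hs => hderiv s (hsub' hs)) (fun s hs => hle s (hsub' hs))
    linarith
  exact fun t ht => (le_max_left _ _).trans <| le_div_of_le_add_mul_integral_sq hα
    (hy.sup continuousOn_const) (fun s _ => le_max_right (y s) 0) hint hsmall t ht

end RiccatiInequality

/-- ODE lemma: if `y' ≤ δ(t) + α y²` on `[0,T]` with `y(0) = y₀ ≥ 0`, and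
`η = y₀ + ∫₀ᵀ δ` satisfies `α η T < 1`, then `y(t) ≤ η / (1 - α η T)` on `[0,T]`,
so `y` remains bounded on `[0,T]`. -/
theorem ode_bounded_on_interval
    (T α y₀ : ℝ) (hT : 0 < T) (hα : 0 < α)
    (δ y y' : ℝ → ℝ)
    (hδcont : ContinuousOn δ (Icc 0 T))
    (hδnonneg : ∀ t ∈ Icc (0:ℝ) T, 0 ≤ δ t)
    (hderiv : ∀ t ∈ Icc (0:ℝ) T, HasDerivWithinAt y (y' t) (Icc 0 T) t)
    (hy0 : y 0 = y₀) (hy₀ : 0 ≤ y₀)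
    (hineq : ∀ t ∈ Icc (0:ℝ) T, y' t ≤ δ t + α * (y t) ^ 2)
    (η : ℝ) (hη : η = y₀ + ∫ s in (0:ℝ)..T, δ s)
    (hsmall : α * η * T < 1) :
    ∀ t ∈ Icc (0:ℝ) T, y t ≤ η / (1 - α * η * T) := by
  have hright : ∀ t ∈ Ioo (0:ℝ) T, HasDerivWithinAt y (y' t) (Ioi t) t := fun t ht =>
    ((hderiv t (Ioo_subset_Icc_self ht)).hasDerivAt (Icc_mem_nhds ht.1 ht.2)).hasDerivWithinAt
  simpa only [sub_zero] using ode_bounded_on_interval_general hα.le hδcont.integrableOn_Icc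
    hδnonneg (fun t ht => (hderiv t ht).continuousWithinAt) hright
    (fun t ht => hineq t (Ioo_subset_Icc_self ht)) (by rw [hη, hy0, max_eq_left hy₀])
    (by rwa [sub_zero])
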